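/- For n ≥ 6 with n ≡ 1 (mod 4), writing d_n(q) = ∑_{k=1}^{β_n} A_n(k) q^k with β_n = binom(n,2) - 1 and r = n(n-1)/4, the sequence A_n(β_n + 2 - k)/A_n(k) for k = 2, ..., r is strictly increasing, and A_n(r+1)/A_n(r) < 1. -/

import Mathlib

open Polynomial

/-- The q-derangement polynomial, defined by the recursion
`d_n(q) = (1+q+⋯+q^{n-1}) d_{n-1}(q) + (-1)^n q^{C(n,2)}` for `n ≥ 2`, with `d_1(q) = 0`. -/
noncomputable def dq : ℕ → Polynomial ℤ
  | 0 => 0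
  | 1 => 0
  | (n + 2) =>
      (∑ i ∈ Finset.range (n + 2), X ^ i) * dq (n + 1)
        + (-1) ^ (n + 2) * X ^ ((n + 2).choose 2)

/-- `A n k` is the coefficient of `q^k` in `d_n(q)`. -/
noncomputable def A (n k : ℕ) : ℤ := (dq n).coeff k

/-!
For odd `n = 2m + 3` two steps of the recursion combine to
`d_n = [2m+2] ([2m+3] d_{2m+1} + q^s)` with `[j] = 1 + q + ⋯ + q^(j-1)` and `s = (2m+2).choose 2`.
The monotonicity of the ratios says that the `2 × 2` minors of adjacent columns of the coefficient
sequence and its reflection are positive. Multiplication by `[j]` replaces both sequences by window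
sums, whose minors expand into minors of the original sequences, so it preserves positivity.
The monomial `q^s` reflects to `q^2`, and it can lower a minor only when `2` lies in the window. For
`k ≤ 2m + 2` the contribution of columns `1` and `2` to the expansion makes up for this loss; at
`k = 2m + 3`, where `2` is about to leave the window, the loss is a whole window sum and has to be
shared among all columns. The induction starts at `d_7`, since strictness fails for `d_5`.
-/

section CrossMinor

variable {ι R : Type*} [CommRing R]

/-- The `2 × 2` minor of the rows `f`, `g` in the columns `i`, `j`; for positive sequences it is
positive exactly when `g i / f i < g j / f j`. -/
def crossMinor (f g : ι → R) (i j : ι) : R := f i * g j - f j * g i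

lemma crossMinor_self (f g : ι → R) (i : ι) : crossMinor f g i i = 0 := by
  simp [crossMinor]

lemma crossMinor_plucker (f g : ι → R) (i j k : ι) :
    f j * crossMinor f g i k = f i * crossMinor f g j k + f k * crossMinor f g i j := by
  simp only [crossMinor]
  ring

lemma crossMinor_pos_trans [LinearOrder R] [IsStrictOrderedRing R] {f g : ι → R} {i j k : ι}
    (hi : 0 < f i) (hj : 0 < f j) (hk : 0 ≤ f k)
    (hij : 0 < crossMinor f g i j) (hjk : 0 < crossMinor f g j k) : 0 < crossMinor f g i k :=
  pos_of_mul_pos_right (crossMinor_plucker f g i j k ▸ by positivity) hj.le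

variable [LT ι] [LE R]

/-- The pair `f`, `g` is totally positive of order two: all its ordered minors are nonnegative.
For positive sequences this says that `g / f` is weakly increasing, without dividing. -/
def CrossMono (f g : ι → R) : Prop := ∀ ⦃i j⦄, i < j → 0 ≤ crossMinor f g i j

end CrossMinor

lemma CrossMono.sum_mul_sum_le {ι R : Type*} [LT ι] [CommRing R] [PartialOrder R] [IsOrderedRing R]
    {f g : ι → R} (h : CrossMono f g) {s t : Finset ι} (hst : ∀ i ∈ s, ∀ j ∈ t, i < j) :
    (∑ j ∈ t, f j) * (∑ i ∈ s, g i) ≤ (∑ i ∈ s, f i) * (∑ j ∈ t, g j) := by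
  rw [Finset.sum_mul_sum, Finset.sum_mul_sum, Finset.sum_comm]
  exact Finset.sum_le_sum fun i hi => Finset.sum_le_sum fun j hj =>
    sub_nonneg.1 (h (hst i hi j hj))

section WindowSum

variable {R : Type*} [AddCommMonoid R]

/-- The sum of the `m` consecutive values of `f` ending at `k`. This is the effect on coefficient
sequences of multiplication by `1 + q + ⋯ + q^(m-1)`. -/
noncomputable def windowSum (m : ℕ) (f : ℤ → R) (k : ℤ) : R := ∑ x ∈ Finset.Ioc (k - m) k, f x

/-- The reflection `k ↦ c + 1 - k`, which swaps the supports `{1, …, c - 1}` and `{2, …, c}`. -/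
def reflectAt {α : Type*} (c : ℤ) (f : ℤ → α) (k : ℤ) : α := f (c + 1 - k)

lemma windowSum_eq_sum_range (m : ℕ) (f : ℤ → R) (k : ℤ) :
    windowSum m f k = ∑ i ∈ Finset.range m, f (k - i) := by
  refine Finset.sum_nbij' (fun x => (k - x).toNat) (fun i => k - i) ?_ ?_ ?_ ?_ ?_ <;>
    intro x hx <;> simp only [Finset.mem_Ioc, Finset.mem_range] at hx ⊢
  case refine_5 => congr; omega
  all_goals omega

lemma windowSum_add (m : ℕ) (f g : ℤ → R) :
    windowSum m (f + g) = windowSum m f + windowSum m g :=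
  funext fun _ => Finset.sum_add_distrib

lemma windowSum_single (m : ℕ) (a : ℤ) (v : R) (k : ℤ) :
    windowSum m (Pi.single a v) k = if a ≤ k ∧ k < a + m then v else 0 := by
  simp only [windowSum, Pi.single_apply, Finset.sum_ite_eq', Finset.mem_Ioc]
  exact if_congr (by omega) rfl rfl

lemma windowSum_add_single_of_notMem {m : ℕ} {f : ℤ → R} {a k : ℤ} {v : R}
    (hk : k < a ∨ a + m ≤ k) : windowSum m (f + Pi.single a v) k = windowSum m f k := by
  rw [windowSum_add, Pi.add_apply, windowSum_single, if_neg (by omega), add_zero]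

lemma windowSum_add_single_of_mem {m : ℕ} {f : ℤ → R} {a k : ℤ} {v : R} (hak : a ≤ k)
    (hka : k < a + m) : windowSum m (f + Pi.single a v) k = windowSum m f k + v := by
  rw [windowSum_add, Pi.add_apply, windowSum_single, if_pos ⟨hak, hka⟩]

lemma windowSum_reflectAt (m : ℕ) (c : ℤ) (f : ℤ → R) :
    windowSum m (reflectAt c f) = reflectAt (c + m - 1) (windowSum m f) := by
  funext k
  rw [reflectAt, windowSum, windowSum]
  refine Finset.sum_nbij' (fun x => c + 1 - x) (fun x => c + 1 - x) ?_ ?_ ?_ ?_ fun x _ => rfl <;>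
    intro x hx <;> simp only [Finset.mem_Ioc] at hx ⊢ <;> omega

lemma reflectAt_add_single (c s : ℤ) (f : ℤ → R) (v : R) :
    reflectAt c (f + Pi.single s v) = reflectAt c f + Pi.single (c + 1 - s) v := by
  funext k
  simp only [reflectAt, Pi.add_apply, Pi.single_apply]
  exact congrArg _ (if_congr (by omega) rfl rfl)

lemma windowSum_eq_sum_Ioc {m : ℕ} {f : ℤ → R} (hf : ∀ k ≤ 0, f k = 0) {k : ℤ} (hk : k ≤ m) :
    windowSum m f k = ∑ x ∈ Finset.Ioc 0 k, f x := by
  refine (Finset.sum_subset (fun x => ?_) fun x => ?_).symm <;> simp only [Finset.mem_Ioc]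
  · omega
  · exact fun _ hx => hf x (by omega)

lemma sum_Ioc_add_sum_Ioc {α : Type*} [LinearOrder α] [LocallyFiniteOrder α] (f : α → R)
    {a b c : α} (hab : a ≤ b) (hbc : b ≤ c) :
    ∑ x ∈ Finset.Ioc a b, f x + ∑ x ∈ Finset.Ioc b c, f x = ∑ x ∈ Finset.Ioc a c, f x := by
  rw [← Finset.sum_union (Finset.Ioc_disjoint_Ioc_of_le le_rfl),
    Finset.Ioc_union_Ioc_eq_Ioc hab hbc]

lemma windowSum_one {m : ℕ} {f : ℤ → R} (hf : ∀ k ≤ 0, f k = 0) (hm : 1 ≤ m) :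
    windowSum m f 1 = f 1 := by
  rw [windowSum_eq_sum_Ioc hf (mod_cast hm), show Finset.Ioc (0 : ℤ) 1 = {1} by decide,
    Finset.sum_singleton]

lemma windowSum_two {m : ℕ} {f : ℤ → R} (hf : ∀ k ≤ 0, f k = 0) (hm : 2 ≤ m) :
    windowSum m f 2 = f 1 + f 2 := by
  rw [windowSum_eq_sum_Ioc hf (mod_cast hm), show Finset.Ioc (0 : ℤ) 2 = {1, 2} by decide,
    Finset.sum_pair (by decide)]

lemma windowSum_three {m : ℕ} {f : ℤ → R} (hf : ∀ k ≤ 0, f k = 0) (hm : 3 ≤ m) :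
    windowSum m f 3 = f 1 + f 2 + f 3 := by
  rw [windowSum_eq_sum_Ioc hf (mod_cast hm), show Finset.Ioc (0 : ℤ) 3 = {1, 2, 3} by decide,
    Finset.sum_insert (by decide), Finset.sum_pair (by decide), add_assoc]

lemma windowSum_add_one {G : Type*} [AddCommGroup G] (m : ℕ) (f : ℤ → G) (k : ℤ) :
    windowSum m f (k + 1) = windowSum m f k - f (k - m + 1) + f (k + 1) := by
  simp only [windowSum_eq_sum_range]
  have h := (Finset.sum_range_succ (fun i : ℕ => f (k + 1 - i)) m).symm.trans
    (Finset.sum_range_succ' _ m)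
  simp only [Nat.cast_add, Nat.cast_one, Nat.cast_zero, sub_zero, add_sub_add_right_eq_sub] at h
  rw [eq_sub_of_add_eq h, sub_add_eq_add_sub k]
  abel

end WindowSum

section WindowMinor

variable {R : Type*} [CommRing R]

/-- Sliding the window by one trades its first column `k - m + 1` for the new column `k + 1`, so
the minor only involves these two columns against the old window. -/
lemma crossMinor_windowSum (m : ℕ) (f g : ℤ → R) (k : ℤ) :
    crossMinor (windowSum m f) (windowSum m g) k (k + 1) =
      ∑ x ∈ Finset.Ioc (k - m) k, (crossMinor f g x (k + 1) + crossMinor f g (k - m + 1) x) := by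
  simp only [crossMinor, windowSum_add_one, Finset.sum_add_distrib, Finset.sum_sub_distrib,
    ← Finset.mul_sum, ← Finset.sum_mul]
  simp only [windowSum]
  ring

variable [PartialOrder R] {f g : ℤ → R} {m : ℕ} {k : ℤ}

lemma CrossMono.crossMinor_window_nonneg (h : CrossMono f g) {x : ℤ}
    (hx : x ∈ Finset.Ioc (k - m) k) : 0 ≤ crossMinor f g (k - m + 1) x := by
  rw [Finset.mem_Ioc] at hx
  rcases (show k - m + 1 ≤ x by omega).eq_or_lt with rfl | hlt
  · exact (crossMinor_self f g _).ge
  · exact h hlt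

lemma CrossMono.sum_crossMinor_le_windowSum [IsOrderedRing R] (h : CrossMono f g) {s : Finset ℤ}
    (hs : s ⊆ Finset.Ioc (k - m) k) :
    ∑ x ∈ s, crossMinor f g x (k + 1) ≤
      crossMinor (windowSum m f) (windowSum m g) k (k + 1) := by
  rw [crossMinor_windowSum]
  have hright {x : ℤ} (hx : x ∈ Finset.Ioc (k - m) k) : 0 ≤ crossMinor f g x (k + 1) :=
    h (by rw [Finset.mem_Ioc] at hx; omega)
  calc ∑ x ∈ s, crossMinor f g x (k + 1)
      ≤ ∑ x ∈ Finset.Ioc (k - m) k, crossMinor f g x (k + 1) :=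
        Finset.sum_le_sum_of_subset_of_nonneg hs fun x hx _ => hright hx
    _ ≤ _ := Finset.sum_le_sum fun x hx =>
        le_add_of_nonneg_right (h.crossMinor_window_nonneg hx)

/-- Columns `x ≤ n` and `n + 1` of windows of width `n`: both windows contain `{2, …, x}`, the first
one also contains `1`, and the second one also `{x + 1, …, n + 1}`. -/
lemma CrossMono.sub_le_crossMinor_windowSum [IsOrderedRing R] (h : CrossMono f g)
    (hf : ∀ k ≤ 0, f k = 0) (hg : ∀ k ≤ 0, g k = 0) {n : ℕ} {x : ℤ} (hx : 1 ≤ x) (hxn : x ≤ n) :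
    f 1 * windowSum n g (n + 1) - g 1 * windowSum n f (n + 1) ≤
      crossMinor (windowSum n f) (windowSum n g) x (n + 1) := by
  have hfirst (a : ℤ → R) (ha : ∀ k ≤ 0, a k = 0) :
      windowSum n a x = a 1 + ∑ t ∈ Finset.Ioc 1 x, a t := by
    rw [windowSum_eq_sum_Ioc ha hxn, ← sum_Ioc_add_sum_Ioc a zero_le_one hx,
      show Finset.Ioc (0 : ℤ) 1 = {1} by decide, Finset.sum_singleton]
  have hsecond (a : ℤ → R) : windowSum n a (n + 1) =
      ∑ t ∈ Finset.Ioc 1 x, a t + ∑ t ∈ Finset.Ioc x (n + 1), a t := by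
    rw [windowSum, add_sub_cancel_left, sum_Ioc_add_sum_Ioc a hx (by omega)]
  have hcross := h.sum_mul_sum_le (s := Finset.Ioc 1 x) (t := Finset.Ioc x (n + 1))
    fun i hi j hj => (Finset.mem_Ioc.1 hi).2.trans_lt (Finset.mem_Ioc.1 hj).1
  rw [crossMinor, hfirst f hf, hfirst g hg, hsecond, hsecond]
  exact sub_nonneg.1 ((sub_nonneg.2 hcross).trans_eq (by ring))

end WindowMinor

section StrictRatioMono

/-- `f` is positive on `{1, …, c - 1}` and vanishes elsewhere. -/
structure PosOnIoo {R : Type*} [Zero R] [LT R] (c : ℤ) (f : ℤ → R) : Prop where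
  pos : ∀ k, 0 < k → k < c → 0 < f k
  eq_zero : ∀ k, k ≤ 0 ∨ c ≤ k → f k = 0

namespace PosOnIoo

lemma nonneg {R : Type*} [Zero R] [Preorder R] {c : ℤ} {f : ℤ → R} (h : PosOnIoo c f) (k : ℤ) :
    0 ≤ f k := by
  by_cases hk : 0 < k ∧ k < c
  · exact (h.pos k hk.1 hk.2).le
  · exact (h.eq_zero k (by omega)).ge

lemma eq_zero_of_nonpos {R : Type*} [Zero R] [LT R] {c : ℤ} {f : ℤ → R} (h : PosOnIoo c f) :
    ∀ k ≤ 0, f k = 0 :=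
  fun k hk => h.eq_zero k (.inl hk)

lemma reflectAt_eq_zero {R : Type*} [Zero R] [LT R] {c : ℤ} {f : ℤ → R} (h : PosOnIoo c f) {k : ℤ}
    (hk : k ≤ 1) : reflectAt c f k = 0 :=
  h.eq_zero _ (by omega)

variable {R : Type*} [AddCommMonoid R] [PartialOrder R] [IsOrderedCancelAddMonoid R]
  {c : ℤ} {f : ℤ → R}

protected lemma windowSum (h : PosOnIoo c f) (hc : 2 ≤ c) {m : ℕ} (hm : 1 ≤ m) :
    PosOnIoo (c + m - 1) (windowSum m f) where
  pos k hk hkc := Finset.sum_pos' (fun x _ => h.nonneg x)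
    ⟨min k (c - 1), by rw [Finset.mem_Ioc]; omega, h.pos _ (by omega) (by omega)⟩
  eq_zero k hk := Finset.sum_eq_zero fun x hx =>
    h.eq_zero x (by rw [Finset.mem_Ioc] at hx; omega)

lemma add_single (h : PosOnIoo c f) {s : ℤ} (hs : 0 < s) (hsc : s < c) {v : R} (hv : 0 ≤ v) :
    PosOnIoo c (f + Pi.single s v) where
  pos k hk hkc := add_pos_of_pos_of_nonneg (h.pos k hk hkc)
    (Pi.single_nonneg (α := fun _ => R).2 hv k)
  eq_zero k hk := by
    rw [Pi.add_apply, h.eq_zero k hk, Pi.single_eq_of_ne (by omega), add_zero]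

lemma windowSum_le_windowSum_add_one {G : Type*} [AddCommGroup G] [PartialOrder G]
    [IsOrderedAddMonoid G] {f : ℤ → G} (h : PosOnIoo c f) {n : ℕ} (hle : f 1 ≤ f (n + 1)) {x : ℤ}
    (hx : x ≤ n) : windowSum n f x ≤ windowSum n f (n + 1) := by
  calc windowSum n f x ≤ windowSum n f n := by
        rw [windowSum_eq_sum_Ioc h.eq_zero_of_nonpos hx,
          windowSum_eq_sum_Ioc h.eq_zero_of_nonpos le_rfl]
        exact Finset.sum_le_sum_of_subset_of_nonneg (Finset.Ioc_subset_Ioc_right hx)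
          fun i _ _ => h.nonneg i
    _ ≤ windowSum n f (n + 1) := by
        rw [windowSum_add_one, sub_self, zero_add, sub_add_eq_add_sub, le_sub_iff_add_le]
        exact add_le_add_right hle _

end PosOnIoo

/-- `f` is positive on `{1, …, c - 1}`, zero elsewhere, and the ratio `f (c + 1 - k) / f k` is
strictly increasing in `k`. The ratio condition is cross-multiplied, so that it also covers
`k = c - 1`, where the next denominator `f c` is zero. -/
structure StrictRatioMono {R : Type*} [CommRing R] [LT R] (c : ℤ) (f : ℤ → R) : Prop
    extends PosOnIoo c f where
  crossMinor_pos : ∀ k, 0 < k → k < c → 0 < crossMinor f (reflectAt c f) k (k + 1)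

lemma crossMinor_reflectAt {R : Type*} [CommRing R] (c : ℤ) (f : ℤ → R) (k : ℤ) :
    crossMinor f (reflectAt c f) (c - k) (c - k + 1) = crossMinor f (reflectAt c f) k (k + 1) := by
  simp only [crossMinor, reflectAt, show c + 1 - (c - k) = k + 1 by ring,
    show c + 1 - (k + 1) = c - k by ring, show c - k + 1 = c + 1 - k by ring, sub_sub_cancel]
  ring

lemma PosOnIoo.strictRatioMono {R : Type*} [CommRing R] [LT R] {c : ℤ} {f : ℤ → R}
    (h : PosOnIoo c f)
    (hhalf : ∀ k, 0 < k → 2 * k ≤ c → 0 < crossMinor f (reflectAt c f) k (k + 1)) :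
    StrictRatioMono c f where
  toPosOnIoo := h
  crossMinor_pos k hk hkc := by
    rcases le_or_gt (2 * k) c with hle | hgt
    · exact hhalf k hk hle
    · exact crossMinor_reflectAt c f k ▸ hhalf (c - k) (by omega) (by omega)

namespace StrictRatioMono

variable {R : Type*} [CommRing R] [LinearOrder R] [IsStrictOrderedRing R] {c : ℤ} {f : ℤ → R}

lemma crossMinor_pos_of_lt (h : StrictRatioMono c f) {i j : ℤ} (hi : 0 < i) (hij : i < j)
    (hj : j ≤ c) : 0 < crossMinor f (reflectAt c f) i j := by
  induction j, Int.add_one_le_iff.2 hij using Int.leInduction with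
  | base => exact h.crossMinor_pos i hi (by omega)
  | succ j hij' ih =>
    exact crossMinor_pos_trans (h.pos i hi (by omega)) (h.pos j (by omega) (by omega))
      (h.nonneg _) (ih (by omega) (by omega)) (h.crossMinor_pos j (by omega) (by omega))

lemma crossMono_reflectAt (h : StrictRatioMono c f) : CrossMono f (reflectAt c f) := by
  intro i j hij
  by_cases hmem : 0 < i ∧ j ≤ c
  · exact (h.crossMinor_pos_of_lt hmem.1 hij hmem.2).le
  · rw [not_and_or] at hmem
    apply ge_of_eq
    rcases hmem with hi | hj
    · rw [crossMinor, h.eq_zero i (by omega), h.reflectAt_eq_zero (k := i) (by omega),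
        zero_mul, mul_zero, sub_zero]
    · rw [crossMinor, h.eq_zero j (by omega), reflectAt, h.eq_zero (c + 1 - j) (by omega), zero_mul,
        mul_zero, sub_zero]

protected lemma windowSum (h : StrictRatioMono c f) (hc : 2 ≤ c) {m : ℕ} (hm : 1 ≤ m)
    (hmc : m ≤ c) : StrictRatioMono (c + m - 1) (windowSum m f) where
  toPosOnIoo := h.toPosOnIoo.windowSum hc hm
  crossMinor_pos k hk hkc := by
    have hmono := h.crossMono_reflectAt
    have hright (x) (hx : x ∈ Finset.Ioc (k - m) k) :
        0 ≤ crossMinor f (reflectAt c f) x (k + 1) :=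
      hmono (by rw [Finset.mem_Ioc] at hx; omega)
    have hleft (x) (hx : x ∈ Finset.Ioc (k - m) k) :
        0 ≤ crossMinor f (reflectAt c f) (k - m + 1) x := hmono.crossMinor_window_nonneg hx
    rw [← windowSum_reflectAt, crossMinor_windowSum]
    refine Finset.sum_pos' (fun x hx => add_nonneg (hright x hx) (hleft x hx)) ?_
    rcases le_or_gt (k + 1) c with hkc' | hkc'
    · have hx : max 1 (k - m + 1) ∈ Finset.Ioc (k - m) k := by rw [Finset.mem_Ioc]; omega
      exact ⟨_, hx, add_pos_of_pos_of_nonneg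
        (h.crossMinor_pos_of_lt (by omega) (by omega) hkc') (hleft _ hx)⟩
    · have hc : c ∈ Finset.Ioc (k - m) k := by rw [Finset.mem_Ioc]; omega
      exact ⟨c, hc, add_pos_of_nonneg_of_pos (hright c hc)
        (h.crossMinor_pos_of_lt (by omega) (by omega) le_rfl)⟩

lemma div_lt_div {K : Type*} [Field K] [LinearOrder K] [IsStrictOrderedRing K] {f : ℤ → ℤ}
    (h : StrictRatioMono c f) {k : ℤ} (hk : 0 < k) (hkc : k + 1 < c) :
    ((reflectAt c f k : ℤ) : K) / f k < ((reflectAt c f (k + 1) : ℤ) : K) / f (k + 1) := by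
  have hminor := h.crossMinor_pos k hk (by omega)
  rw [crossMinor, sub_pos, mul_comm, mul_comm (f k)] at hminor
  rw [div_lt_div_iff₀ (mod_cast h.pos k hk (by omega)) (mod_cast h.pos (k + 1) (by omega) hkc)]
  exact_mod_cast hminor

lemma lt_center {r : ℤ} (h : StrictRatioMono (2 * r) f) (hr : 0 < r) : f (r + 1) < f r := by
  have hminor := h.crossMinor_pos r hr (by omega)
  rw [crossMinor, reflectAt, reflectAt, show 2 * r + 1 - (r + 1) = r by ring,
    show 2 * r + 1 - r = r + 1 by ring] at hminor
  exact lt_of_mul_self_lt_mul_self₀ (h.nonneg r) (sub_pos.1 hminor)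

end StrictRatioMono

end StrictRatioMono

section InductionStep

/-- The facts about `u = windowSum (2 * m + 3) f` and its reflection `v` that the induction step
uses, for `f` the coefficient sequence of `d_{2m+1}`. -/
structure SmoothedPair (m : ℕ) (u v : ℤ → ℤ) : Prop where
  crossMono : CrossMono u v
  left_one : u 1 = 1
  left_two : u 2 = 2 * m
  left_three : u 3 = (2 * m - 1) * (m + 1)
  right_one : v 1 = 0
  right_two : v 2 = m
  right_three : v 3 = m * (m + 1)

namespace SmoothedPair

variable {m : ℕ} {u v : ℤ → ℤ}

lemma mul_left_le_mul_right (h : SmoothedPair m u v) {y : ℤ} (hy : 3 ≤ y) :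
    m * u y ≤ (2 * m - 1) * v y := by
  rcases hy.eq_or_lt with rfl | hlt
  · rw [h.left_three, h.right_three]
    exact le_of_eq (by ring)
  · have hminor := h.crossMono hlt
    rw [crossMinor, h.left_three, h.right_three] at hminor
    exact le_of_mul_le_mul_left (a := (m + 1 : ℤ)) (by linarith) (by positivity)

lemma mul_left_le_mul_crossMinor_two (h : SmoothedPair m u v) {y : ℤ} (hy : 3 ≤ y) :
    m * u y ≤ (2 * m - 1) * crossMinor u v 2 y := by
  rw [crossMinor, h.left_two, h.right_two]
  have := mul_le_mul_of_nonneg_left (h.mul_left_le_mul_right hy)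
    (show (0 : ℤ) ≤ 2 * m by positivity)
  linarith

lemma lt_crossMinor_windowSum (h : SmoothedPair m u v) (hm : 1 ≤ m) {k : ℤ} (hk : 2 ≤ k)
    (hkm : k ≤ 2 * m + 2) (hpos : 0 < u (k + 1)) :
    u (k + 1) <
      crossMinor (windowSum (2 * m + 2) u) (windowSum (2 * m + 2) v) k (k + 1) := by
  have hsub : ({1, 2} : Finset ℤ) ⊆ Finset.Ioc (k - (2 * m + 2 : ℕ)) k := by
    intro x
    simp only [Finset.mem_Ioc, Finset.mem_insert, Finset.mem_singleton]
    omega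
  refine lt_of_lt_of_le ?_ (h.crossMono.sum_crossMinor_le_windowSum hsub)
  rw [Finset.sum_pair (by decide), show crossMinor u v 1 (k + 1) = v (k + 1) by
    simp [crossMinor, h.left_one, h.right_one]]
  have hone := h.mul_left_le_mul_right (show 3 ≤ k + 1 by omega)
  have htwo := h.mul_left_le_mul_crossMinor_two (show 3 ≤ k + 1 by omega)
  exact lt_of_mul_lt_mul_left (a := (2 * m - 1 : ℤ)) (by linarith) (by omega)

/-- Thus each of the `2 * m + 1` columns `3, …, 2 * m + 3` contributes at least
`u y / (2 * m - 1)`, so that together they contribute more than `u y`. -/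
lemma left_le_mul_column (h : SmoothedPair m u v) (hm : 1 ≤ m) {x y : ℤ} (hx : 3 ≤ x) (hy : 3 ≤ y)
    (hle : u x ≤ u y) (hgap : v y ≤ crossMinor u v x y) :
    u y ≤ (2 * m - 1) * (crossMinor u v x y + crossMinor u v 2 x - u x) := by
  have hcolumn := mul_le_mul_of_nonneg_left hgap (show (0 : ℤ) ≤ 2 * m - 1 by omega)
  have hratio := h.mul_left_le_mul_right hy
  have htwo := h.mul_left_le_mul_crossMinor_two hx
  have hbound := mul_le_mul_of_nonneg_left hle (show (0 : ℤ) ≤ m - 1 by omega)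
  linarith

lemma windowSum_lt_crossMinor_windowSum (h : SmoothedPair m u v) (hm : 1 ≤ m)
    (hpos : 0 < u (2 * m + 4)) (hle : ∀ x : ℤ, 3 ≤ x → x ≤ 2 * m + 3 → u x ≤ u (2 * m + 4))
    (hgap : ∀ x : ℤ, 3 ≤ x → x ≤ 2 * m + 3 → v (2 * m + 4) ≤ crossMinor u v x (2 * m + 4)) :
    windowSum (2 * m + 2) u (2 * m + 4) <
      crossMinor (windowSum (2 * m + 2) u) (windowSum (2 * m + 2) v) (2 * m + 3) (2 * m + 4) := by
  set W := Finset.Ioc (2 : ℤ) (2 * m + 3) with hW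
  have hwindow : Finset.Ioc (2 * m + 3 - (2 * m + 2 : ℕ) : ℤ) (2 * m + 3) = insert 2 W := by
    ext x
    simp only [hW, Finset.mem_Ioc, Finset.mem_insert]
    omega
  have htwo_notMem : (2 : ℤ) ∉ W := by simp [hW]
  have hcolumns : W.card • u (2 * m + 4) ≤ ∑ x ∈ W,
      (2 * m - 1) * (crossMinor u v x (2 * m + 4) + crossMinor u v 2 x - u x) := by
    refine Finset.card_nsmul_le_sum W _ _ fun x hx => ?_
    rw [hW, Finset.mem_Ioc] at hx
    exact h.left_le_mul_column hm (by omega) (by omega) (hle x (by omega) hx.2)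
      (hgap x (by omega) hx.2)
  rw [nsmul_eq_mul, hW, Int.card_Ioc, show ((2 * m + 3 - 2 : ℤ).toNat : ℤ) = 2 * m + 1 by omega,
    ← hW, ← Finset.mul_sum, Finset.sum_sub_distrib] at hcolumns
  have htwo := h.mul_left_le_mul_crossMinor_two (y := 2 * m + 4) (by omega)
  have hmargin : 0 < (m + 2) * u (2 * m + 4) := by positivity
  rw [show (2 * m + 4 : ℤ) = 2 * m + 3 + 1 by ring, crossMinor_windowSum, windowSum_add_one,
    windowSum, hwindow, Finset.sum_insert htwo_notMem, Finset.sum_insert htwo_notMem,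
    show (2 * m + 3 - (2 * m + 2 : ℕ) + 1 : ℤ) = 2 by push_cast; ring, crossMinor_self,
    show (2 * m + 3 + 1 : ℤ) = 2 * m + 4 by ring]
  exact lt_of_mul_lt_mul_left (a := (2 * m - 1 : ℤ)) (by linarith) (by omega)

end SmoothedPair

/-- The induction hypothesis on the coefficient sequence `f` of `d_{2m+1}`, with
`c = (2m+1).choose 2`: strict ratio monotonicity and the first and last nonzero coefficients. -/
structure OddInvariant (m : ℕ) (c : ℤ) (f : ℤ → ℤ) : Prop extends StrictRatioMono c f where
  lt_bound : 2 * m + 4 < c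
  one : f 1 = 1
  two : f 2 = 2 * m - 1
  three : f 3 = (2 * m + 1) * (m - 1)
  reflect_two : reflectAt c f 2 = m
  reflect_three : reflectAt c f 3 = m ^ 2

namespace OddInvariant

variable {m : ℕ} {c : ℤ} {f : ℤ → ℤ}

lemma strictRatioMono_windowSum (h : OddInvariant m c f) :
    StrictRatioMono (c + 2 * m + 2) (windowSum (2 * m + 3) f) := by
  have hlt := h.lt_bound
  rw [show c + 2 * m + 2 = c + (2 * m + 3 : ℕ) - 1 by push_cast; ring]
  exact h.toStrictRatioMono.windowSum (by omega) (by omega) (by omega)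

lemma reflectAt_windowSum (c : ℤ) (f : ℤ → ℤ) :
    reflectAt (c + 2 * m + 2) (windowSum (2 * m + 3) f) =
      windowSum (2 * m + 3) (reflectAt c f) := by
  rw [windowSum_reflectAt, show c + 2 * m + 2 = c + (2 * m + 3 : ℕ) - 1 by push_cast; ring]

lemma reflectAt_windowSum_add_single (c : ℤ) (f : ℤ → ℤ) :
    reflectAt (c + 4 * m + 3)
        (windowSum (2 * m + 2) (windowSum (2 * m + 3) f + Pi.single (c + 2 * m + 1) 1)) =
      windowSum (2 * m + 2) (windowSum (2 * m + 3) (reflectAt c f) + Pi.single 2 1) := by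
  rw [show c + 4 * m + 3 = c + 2 * m + 2 + (2 * m + 2 : ℕ) - 1 by push_cast; ring,
    ← windowSum_reflectAt, reflectAt_add_single, reflectAt_windowSum,
    show c + 2 * m + 2 + 1 - (c + 2 * m + 1) = 2 by ring]

lemma smoothedPair (h : OddInvariant m c f) :
    SmoothedPair m (windowSum (2 * m + 3) f) (windowSum (2 * m + 3) (reflectAt c f)) := by
  have hf := h.eq_zero_of_nonpos
  have hg (k : ℤ) (hk : k ≤ 0) : reflectAt c f k = 0 := h.reflectAt_eq_zero (by omega)
  constructor
  case crossMono => exact reflectAt_windowSum c f ▸ h.strictRatioMono_windowSum.crossMono_reflectAt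
  case left_one => rw [windowSum_one hf (by omega), h.one]
  case left_two => rw [windowSum_two hf (by omega), h.one, h.two]; ring
  case left_three => rw [windowSum_three hf (by omega), h.one, h.two, h.three]; ring
  case right_one => rw [windowSum_one hg (by omega), h.reflectAt_eq_zero le_rfl]
  case right_two =>
    rw [windowSum_two hg (by omega), h.reflectAt_eq_zero le_rfl, h.reflect_two]; ring
  case right_three =>
    rw [windowSum_three hg (by omega), h.reflectAt_eq_zero le_rfl, h.reflect_two,
      h.reflect_three]; ring

lemma windowSum_lt_crossMinor (h : OddInvariant m c f) (hm : 1 ≤ m) :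
    windowSum (2 * m + 2) (windowSum (2 * m + 3) f) (2 * m + 4) <
      crossMinor (windowSum (2 * m + 2) (windowSum (2 * m + 3) f))
        (windowSum (2 * m + 2) (windowSum (2 * m + 3) (reflectAt c f)))
        (2 * m + 3) (2 * m + 4) := by
  have hlt := h.lt_bound
  have hlast : ((2 * m + 3 : ℕ) + 1 : ℤ) = 2 * m + 4 := by push_cast; ring
  refine h.smoothedPair.windowSum_lt_crossMinor_windowSum hm
    (h.strictRatioMono_windowSum.pos _ (by omega) (by omega)) (fun x _ hxm => ?_)
    (fun x hx hxm => ?_)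
  · rw [← hlast]
    exact h.windowSum_le_windowSum_add_one
      (h.one.trans_le (h.pos _ (by omega) (by omega))) (by omega)
  · have hgap := h.crossMono_reflectAt.sub_le_crossMinor_windowSum h.eq_zero_of_nonpos
      (fun k _ => h.reflectAt_eq_zero (by omega)) (n := 2 * m + 3) (x := x) (by omega) (by omega)
    rwa [h.one, h.reflectAt_eq_zero le_rfl, one_mul, zero_mul, sub_zero, hlast] at hgap

/-- The summand `Pi.single 2 1` is the reflection of the term `q^((2m+2).choose 2)` of the
recursion. -/
lemma crossMinor_pos_of_add_single (h : OddInvariant m c f) (hm : 1 ≤ m) {k : ℤ} (hk : 0 < k)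
    (hkc : k < c + 4 * m + 3) :
    0 < crossMinor (windowSum (2 * m + 2) (windowSum (2 * m + 3) f))
      (windowSum (2 * m + 2) (windowSum (2 * m + 3) (reflectAt c f) + Pi.single 2 1))
      k (k + 1) := by
  have hlt := h.lt_bound
  have hu := h.strictRatioMono_windowSum
  have hF := hu.windowSum (m := 2 * m + 2) (by omega) (by omega) (by omega)
  have hminor := hF.crossMinor_pos k hk (by omega)
  rw [← windowSum_reflectAt, reflectAt_windowSum, crossMinor] at hminor
  rw [crossMinor]
  rcases (show k = 1 ∨ (2 ≤ k ∧ k ≤ 2 * m + 2) ∨ k = 2 * m + 3 ∨ 2 * m + 4 ≤ k by omega) with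
    rfl | hsmall | rfl | hlarge
  · have hpos := hF.pos 1 one_pos (by omega)
    rw [windowSum_add_single_of_mem (by omega) (by omega),
      windowSum_add_single_of_notMem (by omega)]
    linarith
  · have hnext := hu.pos (k + 1) (by omega) (by omega)
    have hgap := h.smoothedPair.lt_crossMinor_windowSum hm hsmall.1 hsmall.2 hnext
    have hdrop := hu.nonneg (k - (2 * m + 2 : ℕ) + 1)
    have hslide := windowSum_add_one (2 * m + 2) (windowSum (2 * m + 3) f) k
    rw [crossMinor] at hgap
    rw [windowSum_add_single_of_mem (by omega) (by omega),
      windowSum_add_single_of_mem (by omega) (by omega)]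
    linarith
  · have hgap := h.windowSum_lt_crossMinor hm
    rw [crossMinor] at hgap
    rw [windowSum_add_single_of_notMem (by omega),
      windowSum_add_single_of_mem (by omega) (by omega),
      show (2 * m + 3 + 1 : ℤ) = 2 * m + 4 by ring]
    linarith
  · rwa [windowSum_add_single_of_notMem (by omega), windowSum_add_single_of_notMem (by omega)]

lemma strictRatioMono_add_single (h : OddInvariant m c f) (hm : 1 ≤ m) :
    StrictRatioMono (c + 4 * m + 3)
      (windowSum (2 * m + 2) (windowSum (2 * m + 3) f + Pi.single (c + 2 * m + 1) 1)) := by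
  have hlt := h.lt_bound
  have hpos := (h.strictRatioMono_windowSum.add_single (s := c + 2 * m + 1) (by omega) (by omega)
    zero_le_one).windowSum (m := 2 * m + 2) (by omega) (by omega)
  rw [show c + 2 * m + 2 + (2 * m + 2 : ℕ) - 1 = c + 4 * m + 3 by push_cast; ring] at hpos
  refine hpos.strictRatioMono fun k hk hkc => ?_
  rw [reflectAt_windowSum_add_single, crossMinor,
    windowSum_add_single_of_notMem (a := c + 2 * m + 1) (by omega),
    windowSum_add_single_of_notMem (a := c + 2 * m + 1) (by omega)]
  exact h.crossMinor_pos_of_add_single hm hk (by omega)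

lemma step (h : OddInvariant m c f) (hm : 1 ≤ m) :
    OddInvariant (m + 1) (c + 4 * m + 3)
      (windowSum (2 * m + 2) (windowSum (2 * m + 3) f + Pi.single (c + 2 * m + 1) 1)) := by
  have hlt := h.lt_bound
  have hu := h.smoothedPair
  have hleft := h.strictRatioMono_windowSum.eq_zero_of_nonpos
  have hright (j : ℤ) (hj : j ≤ 0) : windowSum (2 * m + 3) (reflectAt c f) j = 0 := by
    rw [← reflectAt_windowSum, h.strictRatioMono_windowSum.reflectAt_eq_zero (by omega)]
  constructor
  case toStrictRatioMono => exact h.strictRatioMono_add_single hm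
  case lt_bound => push_cast; omega
  case one =>
    rw [windowSum_add_single_of_notMem (by omega), windowSum_one hleft (by omega), hu.left_one]
  case two =>
    rw [windowSum_add_single_of_notMem (by omega), windowSum_two hleft (by omega), hu.left_one,
      hu.left_two]
    push_cast; ring
  case three =>
    rw [windowSum_add_single_of_notMem (by omega), windowSum_three hleft (by omega), hu.left_one,
      hu.left_two, hu.left_three]
    push_cast; ring
  case reflect_two =>
    rw [reflectAt_windowSum_add_single, windowSum_add_single_of_mem (by decide) (by omega),
      windowSum_two hright (by omega), hu.right_one, hu.right_two]
    push_cast; ring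
  case reflect_three =>
    rw [reflectAt_windowSum_add_single, windowSum_add_single_of_mem (by decide) (by omega),
      windowSum_three hright (by omega), hu.right_one, hu.right_two, hu.right_three]
    push_cast; ring

end OddInvariant

end InductionStep

section IntCoeff

variable {R : Type*} [Semiring R]

/-- The coefficient sequence of a polynomial, extended by zero to negative indices, so that window
sums and reflections need no side conditions. -/
noncomputable def intCoeff (p : R[X]) (k : ℤ) : R := if 0 ≤ k then p.coeff k.toNat else 0

lemma intCoeff_natCast (p : R[X]) (k : ℕ) : intCoeff p k = p.coeff k := by
  rw [intCoeff, if_pos k.cast_nonneg, Int.toNat_natCast]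

lemma intCoeff_add (p q : R[X]) : intCoeff (p + q) = intCoeff p + intCoeff q := by
  funext k
  simp only [intCoeff, Pi.add_apply, coeff_add, ite_add_zero]

lemma intCoeff_X_pow (n : ℕ) : intCoeff (X ^ n : R[X]) = Pi.single (n : ℤ) 1 := by
  funext k
  rw [intCoeff, coeff_X_pow, Pi.single_apply, ← ite_and]
  exact if_congr (by omega) rfl rfl

lemma intCoeff_X_pow_mul (i : ℕ) (p : R[X]) (k : ℤ) :
    intCoeff (X ^ i * p) k = intCoeff p (k - i) := by
  rw [intCoeff, intCoeff, coeff_X_pow_mul', ← ite_and, Int.toNat_sub']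
  exact if_congr (by omega) rfl rfl

lemma intCoeff_geom_sum_mul (m : ℕ) (p : R[X]) :
    intCoeff ((∑ i ∈ Finset.range m, X ^ i) * p) = windowSum m (intCoeff p) := by
  funext k
  rw [windowSum_eq_sum_range]
  induction m with
  | zero => simp [intCoeff]
  | succ m ih =>
    rw [Finset.sum_range_succ, Finset.sum_range_succ, add_mul, intCoeff_add, Pi.add_apply, ih,
      intCoeff_X_pow_mul]

end IntCoeff

lemma dq_two_mul_add_three (m : ℕ) :
    dq (2 * m + 3) = (∑ i ∈ Finset.range (2 * m + 2), X ^ i) *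
      ((∑ i ∈ Finset.range (2 * m + 3), X ^ i) * dq (2 * m + 1) + X ^ (2 * m + 2).choose 2) := by
  have hchoose : (2 * m + 3).choose 2 = (2 * m + 2).choose 2 + (2 * m + 2) := by
    rw [Nat.choose_succ_succ' (2 * m + 2) 1, Nat.choose_one_right, add_comm]
  rw [show 2 * m + 3 = 2 * m + 1 + 2 from rfl, dq, show 2 * m + 1 + 1 = 2 * m + 2 from rfl, dq]
  simp only [Even.neg_one_pow (show Even (2 * m + 2) from ⟨m + 1, by ring⟩),
    Odd.neg_one_pow (show Odd (2 * m + 1 + 2) from ⟨m + 1, by ring⟩)]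
  rw [show 2 * m + 1 + 2 = 2 * m + 3 from rfl, hchoose, Finset.sum_range_succ _ (2 * m + 2)]
  ring

/-- The coefficients of `d_7`, the base case of the induction. -/
def dqSevenCoeffs : List ℤ :=
  [0, 1, 5, 14, 30, 54, 86, 123, 160, 191, 210, 214, 202, 176, 141, 104, 69, 41, 21, 9, 3]

lemma dq_seven : dq 7 = ∑ i ∈ Finset.range 21, Polynomial.C (dqSevenCoeffs.getD i 0) * X ^ i := by
  simp only [dq, Finset.sum_range_succ, Finset.sum_range_zero, dqSevenCoeffs,
    List.getD_cons_zero, List.getD_cons_succ, map_ofNat, map_zero, map_one,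
    show Nat.choose 2 2 = 1 from rfl, show Nat.choose 3 2 = 3 from rfl,
    show Nat.choose 4 2 = 6 from rfl, show Nat.choose 5 2 = 10 from rfl,
    show Nat.choose 6 2 = 15 from rfl, show Nat.choose 7 2 = 21 from rfl]
  ring

lemma coeff_dq_seven (k : ℕ) : (dq 7).coeff k = dqSevenCoeffs.getD k 0 := by
  rw [dq_seven, finsetSum_coeff]
  simp only [coeff_C_mul_X_pow, Finset.sum_ite_eq, Finset.mem_range]
  split_ifs with hk
  · rfl
  · exact (List.getD_eq_default _ _ (not_lt.1 hk)).symm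

lemma oddInvariant_dq_seven : OddInvariant 3 21 (intCoeff (dq 7)) := by
  have hcoeff : intCoeff (dq 7) = fun k => if 0 ≤ k then dqSevenCoeffs.getD k.toNat 0 else 0 := by
    funext k
    rw [intCoeff, coeff_dq_seven]
  rw [hcoeff]
  have hpos : PosOnIoo 21 fun k : ℤ => if 0 ≤ k then dqSevenCoeffs.getD k.toNat 0 else 0 := by
    refine ⟨fun k hk hkc => by interval_cases k <;> decide, fun k hk => ?_⟩
    rcases (show k < 0 ∨ k = 0 ∨ 21 ≤ k by omega) with hneg | rfl | hlarge
    · exact if_neg hneg.not_ge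
    · rfl
    · rw [if_pos (by omega), List.getD_eq_default _ _ ((Int.le_toNat (by omega)).2 hlarge)]
  refine ⟨hpos.strictRatioMono fun k hk hkc => ?_, by decide, ?_, ?_, ?_, ?_, ?_⟩
  · have hten : k ≤ 10 := by omega
    interval_cases k <;> decide
  all_goals decide

lemma oddInvariant_dq {m : ℕ} (hm : 3 ≤ m) :
    OddInvariant m ((2 * m + 1).choose 2 : ℕ) (intCoeff (dq (2 * m + 1))) := by
  induction m, hm using Nat.le_induction with
  | base => exact oddInvariant_dq_seven
  | succ m hm ih =>
    have hmid : ((2 * m + 2).choose 2 : ℤ) = (2 * m + 1).choose 2 + 2 * m + 1 := by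
      rw [Nat.choose_succ_succ' (2 * m + 1) 1, Nat.choose_one_right]
      push_cast
      ring
    have hlast : ((2 * m + 3).choose 2 : ℤ) = (2 * m + 1).choose 2 + 4 * m + 3 := by
      rw [Nat.choose_succ_succ' (2 * m + 2) 1, Nat.choose_one_right, Nat.cast_add, hmid]
      push_cast
      ring
    rw [show 2 * (m + 1) + 1 = 2 * m + 3 by ring, dq_two_mul_add_three, intCoeff_geom_sum_mul,
      intCoeff_add, intCoeff_geom_sum_mul, intCoeff_X_pow, hmid, hlast]
    exact ih.step (by omega)

lemma strictRatioMono_dq {n : ℕ} (hn : 6 ≤ n) (hodd : Odd n) :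
    StrictRatioMono (n.choose 2 : ℕ) (intCoeff (dq n)) := by
  obtain ⟨m, rfl⟩ := hodd
  exact (oddInvariant_dq (by omega)).toStrictRatioMono

theorem stmt_15_general (n : ℕ) (hn : 6 ≤ n) (hodd : Odd n) :
    (∀ k, 1 ≤ k → k + 1 < n.choose 2 →
      (A n (n.choose 2 - 1 + 2 - k) : ℚ) / (A n k : ℚ) <
        (A n (n.choose 2 - 1 + 2 - (k + 1)) : ℚ) / (A n (k + 1) : ℚ)) ∧
    (n % 4 = 1 → (A n (n * (n - 1) / 4 + 1) : ℚ) / (A n (n * (n - 1) / 4) : ℚ) < 1) := by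
  have hmono := strictRatioMono_dq hn hodd
  have hA (k : ℕ) : A n k = intCoeff (dq n) k := (intCoeff_natCast _ _).symm
  refine ⟨fun k hk hkc => ?_, fun hmod => ?_⟩
  · have hreflect (j : ℕ) (hj : j ≤ n.choose 2) : A n (n.choose 2 - 1 + 2 - j) =
        reflectAt (n.choose 2 : ℕ) (intCoeff (dq n)) j := by
      rw [hA, reflectAt]
      congr 1
      omega
    rw [hreflect k (by omega), hreflect (k + 1) hkc.le, hA, hA, Nat.cast_succ]
    exact hmono.div_lt_div (by omega) (by omega)
  · have hdvd : 4 ∣ n * (n - 1) := Dvd.dvd.mul_left (by omega) n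
    have hn' : 5 ≤ n * (n - 1) := by nlinarith [show 5 ≤ n - 1 by omega]
    have hcenter : (n.choose 2 : ℤ) = 2 * (n * (n - 1) / 4 : ℕ) := by
      rw [Nat.choose_two_right]
      omega
    rw [hcenter] at hmono
    rw [hA, hA, div_lt_one (mod_cast hmono.pos _ (by omega) (by omega)), Int.cast_lt]
    exact hmono.lt_center (by omega)

theorem stmt_15 (n : ℕ) (hn : 6 ≤ n) (hmod : n % 4 = 1) :
    (∀ k, 2 ≤ k → k + 1 ≤ n * (n - 1) / 4 →
      (A n (n.choose 2 - 1 + 2 - k) : ℚ) / (A n k : ℚ) <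
        (A n (n.choose 2 - 1 + 2 - (k + 1)) : ℚ) / (A n (k + 1) : ℚ)) ∧
    (A n (n * (n - 1) / 4 + 1) : ℚ) / (A n (n * (n - 1) / 4) : ℚ) < 1 := by
  have hgeneral := stmt_15_general n hn (Nat.odd_iff.2 (by omega))
  refine ⟨fun k hk hkr => hgeneral.1 k (by omega) ?_, hgeneral.2 hmod⟩
  rw [Nat.choose_two_right]
  omega
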